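/- There is a universal constant C > 0 such that the following holds. Let u_1, ..., u_m be column vectors in ℂ^d such that Σ_{i=1}^m u_i u_i* ≤ I (i.e., I − Σ u_i u_i* is positive semidefinite) and ‖u_i‖² ≤ ε for all i. Suppose 0 ≤ t_i ≤ 1 for 1 ≤ i ≤ m. Then there exists a set of indices S ⊆ {1, ..., m} such that ‖Σ_{i ∈ S} u_i u_i* − Σ_{i=1}^m t_i u_i u_i*‖ ≤ C ε^{1/8}. -/

import Mathlib

open ComplexOrder

/-- The outer product `u u*` of a vector `u ∈ ℂ^d` with itself, as a `d × d` matrix. -/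
noncomputable def outer {d : ℕ} (u : EuclideanSpace ℂ (Fin d)) :
    Matrix (Fin d) (Fin d) ℂ :=
  Matrix.of fun i j => u i * starRingEnd ℂ (u j)

/-- The operator norm of a matrix, acting on Euclidean space. -/
noncomputable def opNorm {d : ℕ} (A : Matrix (Fin d) (Fin d) ℂ) : ℝ :=
  ‖Matrix.toEuclideanCLM (𝕜 := ℂ) A‖


set_option linter.all false

namespace KS

variable {ι : Type*} [Fintype ι] [DecidableEq ι]

/-- Finite difference (equals the partial derivative for multi-affine functions). -/
def pd {K : Type*} [Ring K] (i : ι) (p : (ι → K) → K) : (ι → K) → K :=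
  fun x => p (x + Pi.single i 1) - p x

/-- Affine in each coordinate. -/
def MAff {K : Type*} [Ring K] (p : (ι → K) → K) : Prop :=
  ∀ i x w, p (x + Pi.single i w) = p x + w * pd i p x

/-- The operator `1 - a ∂_i - b ∂_j`. -/
def TT {K : Type*} [Ring K] (a b : K) (i j : ι) (p : (ι → K) → K) : (ι → K) → K :=
  fun x => p x - a * pd i p x - b * pd j p x

/-- Complexification of a real point. -/
def cx (x : ι → ℝ) : ι → ℂ := fun i => (x i : ℂ)

/-- Complex stable extension. -/
structure CStab (P : (ι → ℂ) → ℂ) : Prop where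
  cont : Continuous P
  aff : MAff P
  stab : ∀ z, (∀ i, 0 < (z i).im) → P z ≠ 0

/-- Real stable multi-affine functions. -/
def RStab (p : (ι → ℝ) → ℝ) : Prop :=
  ∃ P : (ι → ℂ) → ℂ, CStab P ∧ ∀ x, P (cx x) = (p x : ℂ)

/-- Strongly Rayleigh functions. -/
structure Ray (p : (ι → ℝ) → ℝ) : Prop where
  aff : MAff p
  ray : ∀ i j x, p x * pd i (pd j p) x ≤ pd i p x * pd j p x

section
variable {K : Type*} [CommRing K]

theorem pd_comm (i j : ι) (p : (ι → K) → K) : pd i (pd j p) = pd j (pd i p) := by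
  funext x
  simp only [pd]
  rw [add_right_comm x]
  ring

theorem MAff.pdd {p : (ι → K) → K} (h : MAff p) (j : ι) : MAff (pd j p) := by
  intro i x w
  have h1 := h i (x + Pi.single j 1) w
  have h2 := h i x w
  have h3 := add_right_comm x (Pi.single j 1) (Pi.single i w)
  simp only [KS.pd] at *
  rw [← h3, h1, h2]
  have h4 := add_right_comm x (Pi.single j 1) (Pi.single i 1)
  rw [h4]; ring

theorem MAff.tt {p : (ι → K) → K} (h : MAff p) (a b : K) (j k : ι) : MAff (TT a b j k p) := by
  intro i x w
  have h1 := h i x w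
  have h2 := h.pdd j i x w
  have h3 := h.pdd k i x w
  have e : KS.pd i (KS.TT a b j k p) x =
    KS.pd i p x - a * KS.pd i (KS.pd j p) x - b * KS.pd i (KS.pd k p) x := by
    simp only [KS.pd, KS.TT]; ring
  rw [e]
  simp only [KS.TT]
  rw [h1, h2, h3]; ring

theorem MAff.pd_self {p : (ι → K) → K} (h : MAff p) (i : ι) (x) : KS.pd i (KS.pd i p) x = 0 := by
  have h1 := h i x (1 + 1)
  have h2 := h i x 1
  rw [Pi.single_add, ← add_assoc] at h1
  simp only [KS.pd] at *
  rw [h1]; ring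

theorem pd_TT (c i j : ι) (a b : K) (p : (ι → K) → K) (x) :
    pd c (TT a b i j p) x = pd c p x - a * pd i (pd c p) x - b * pd j (pd c p) x := by
  rw [pd_comm i c, pd_comm j c]
  simp only [pd, TT]; ring

theorem TT_comm (a b a' b' : K) (i j i' j' : ι) (p : (ι → K) → K) :
    TT a b i j (TT a' b' i' j' p) = TT a' b' i' j' (TT a b i j p) := by
  funext x
  have e : ∀ (a b : K) (i j : ι) (q : (ι → K) → K) (x : ι → K),
    TT a b i j q x = q x - a * pd i q x - b * pd j q x := fun _ _ _ _ _ _ => rfl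
  rw [e a b i j _ x, e a' b' i' j' (TT a b i j p) x, pd_TT, pd_TT, pd_TT, pd_TT]
  rw [pd_comm i i', pd_comm i j', pd_comm j i', pd_comm j j']
  simp only [TT]
  ring
end

theorem CStab.key {P : (ι → ℂ) → ℂ} (h : CStab P) (z : ι → ℂ) (hz : ∀ i, 0 < (z i).im) (i : ι) :
    pd i P z = 0 ∨ (pd i P z / P z).im < 0 := by
  by_cases h0 : pd i P z = 0
  · exact Or.inl h0
  right
  have hP := h.stab z hz
  by_contra hc
  push Not at hc
  -- w = - P / pd
  set w : ℂ := - (P z / pd i P z) with hw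
  have hwim : 0 ≤ w.im := by
    have : w = - (pd i P z / P z)⁻¹ := by rw [hw, inv_div]
    rw [this, Complex.neg_im, Complex.inv_im]
    have := div_nonneg hc (Complex.normSq_nonneg (pd i P z / P z))
    rw [neg_div, neg_neg]; exact this
  have h1 := h.aff i z w
  have h2 : P (z + Pi.single i w) = 0 := by
    rw [h1, hw]; field_simp; ring
  refine h.stab _ ?_ h2
  intro j
  by_cases hj : j = i
  · subst hj; simp; linarith [hz j]
  · simp [hj, hz j]

theorem CStab.tt {P : (ι → ℂ) → ℂ} (h : CStab P) {a b : ℝ} (ha : 0 ≤ a) (hb : 0 ≤ b) (i j : ι) :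
    CStab (TT (a : ℂ) b i j P) := by
  refine ⟨?_, h.aff.tt _ _ _ _, ?_⟩
  · have := h.cont
    unfold KS.TT pd
    fun_prop
  · intro z hz h0
    have hP := h.stab z hz
    have e : (1 : ℂ) = a * (pd i P z / P z) + b * (pd j P z / P z) := by
      simp only [KS.TT] at h0
      field_simp
      linear_combination h0
    have hle : ∀ k, (pd k P z / P z).im ≤ 0 := by
      intro k
      rcases h.key z hz k with h1 | h1
      · simp [h1]
      · exact h1.le
    have him := congrArg Complex.im e
    simp only [Complex.add_im, Complex.one_im, Complex.im_ofReal_mul] at him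
    have hi := mul_nonpos_of_nonneg_of_nonpos ha (hle i)
    have hj := mul_nonpos_of_nonneg_of_nonpos hb (hle j)
    have hz0 : ∀ (c : ℝ) k, c * (pd k P z / P z).im = 0 → (c : ℂ) * (pd k P z / P z) = 0 := by
      intro c k hk
      rcases mul_eq_zero.1 hk with h1 | h1
      · simp [h1]
      · rcases h.key z hz k with h2 | h2
        · simp [h2]
        · exact absurd h1 h2.ne
    rw [hz0 a i (by linarith), hz0 b j (by linarith)] at e
    simp at e

theorem cx_add_single (x : ι → ℝ) (i : ι) (w : ℝ) :
    cx (x + Pi.single i w) = cx x + Pi.single i (w : ℂ) := by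
  funext j
  by_cases h : j = i
  · subst h; simp [cx]
  · simp [cx, h]

theorem ext_pd {P : (ι → ℂ) → ℂ} {p : (ι → ℝ) → ℝ} (h : ∀ x, P (cx x) = (p x : ℂ)) (i : ι) :
    ∀ x, pd i P (cx x) = ((pd i p x : ℝ) : ℂ) := by
  intro x
  have := cx_add_single x i 1
  simp only [Complex.ofReal_one] at this
  simp only [pd]
  rw [← this, h, h]; push_cast; rfl

theorem RStab.tt {p : (ι → ℝ) → ℝ} (h : RStab p) {a b : ℝ} (ha : 0 ≤ a) (hb : 0 ≤ b) (i j : ι) :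
    RStab (TT a b i j p) := by
  obtain ⟨P, hP, hx⟩ := h
  refine ⟨_, hP.tt ha hb i j, ?_⟩
  intro x
  simp only [KS.TT]
  rw [ext_pd hx, ext_pd hx, hx]
  push_cast; rfl

theorem RStab.ray {p : (ι → ℝ) → ℝ} (h : RStab p) : Ray p := by
  obtain ⟨P, hP, hx⟩ := h
  constructor
  · intro i x w
    have := hP.aff i (cx x) w
    rw [← cx_add_single, hx, hx, ext_pd hx] at this
    exact_mod_cast this
  · intro i j x
    have hclosed : ∀ z, (∀ k, 0 ≤ (z k).im) →
        (pd j P z * (starRingEnd ℂ) (P z)).im ≤ 0 := by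
      intro z hz
      have hopen : ∀ η : ℝ, 0 < η →
          (pd j P (fun k => z k + η * Complex.I) *
            (starRingEnd ℂ) (P (fun k => z k + η * Complex.I))).im ≤ 0 := by
        intro η hη
        set z' : ι → ℂ := fun k => z k + η * Complex.I with hz'
        have hz'im : ∀ k, 0 < (z' k).im := by
          intro k; simp [hz']; linarith [hz k]
        have hP0 := hP.stab z' hz'im
        have e : pd j P z' * (starRingEnd ℂ) (P z') =
            ((Complex.normSq (P z') : ℝ) : ℂ) * (pd j P z' / P z') := by
          rw [Complex.normSq_eq_conj_mul_self]; field_simp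
        rw [e, Complex.im_ofReal_mul]
        apply mul_nonpos_of_nonneg_of_nonpos (Complex.normSq_nonneg _)
        rcases hP.key z' hz'im j with h1 | h1
        · simp [h1]
        · exact h1.le
      have hc : Continuous (fun η : ℝ => (pd j P (fun k => z k + η * Complex.I) *
            (starRingEnd ℂ) (P (fun k => z k + η * Complex.I))).im) := by
        have := hP.cont
        have hconj := Complex.continuous_conj
        unfold pd
        fun_prop
      have ht := (hc.tendsto 0).mono_left (nhdsWithin_le_nhds (s := Set.Ioi (0 : ℝ)))
      have := le_of_tendsto ht (Filter.eventually_of_mem self_mem_nhdsWithin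
        (fun η hη => hopen η hη))
      simpa using this
    have h1 := hclosed (cx x + Pi.single i Complex.I) (by
      intro k
      by_cases hk : k = i
      · subst hk; simp [cx]
      · simp [cx, hk])
    rw [hP.aff, (hP.aff.pdd j), ext_pd hx, ext_pd hx, hx, ext_pd (ext_pd hx j)] at h1
    simp at h1
    linarith

/-- Positive on the orthant above `z`. -/
def Above (p : (ι → ℝ) → ℝ) (z : ι → ℝ) : Prop := ∀ x, z ≤ x → 0 < p x

theorem Ray.mono {p : (ι → ℝ) → ℝ} (h : Ray p) {z x : ι → ℝ} (hz : Above p z) (hx : z ≤ x) (c : ι) :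
    pd c p x * p z ≤ pd c p z * p x := by
  have key : ∀ s : Finset ι,
      let y := z + ∑ i ∈ s, Pi.single i (x i - z i)
      z ≤ y ∧ pd c p y * p z ≤ pd c p z * p y := by
    intro s
    induction s using Finset.induction_on with
    | empty => simp
    | insert i s hi ih =>
      obtain ⟨h1, h2⟩ := ih
      set y := z + ∑ i ∈ s, Pi.single i (x i - z i) with hy
      have e : z + ∑ i ∈ insert i s, Pi.single i (x i - z i) = y + Pi.single i (x i - z i) := by
        rw [Finset.sum_insert hi, hy]; abel
      have hh : 0 ≤ x i - z i := by linarith [hx i]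
      simp only [e]
      have h3 : z ≤ y + Pi.single i (x i - z i) := by
        refine h1.trans ?_
        rw [le_add_iff_nonneg_right]
        exact Pi.single_nonneg.2 hh
      refine ⟨h3, ?_⟩
      have p1 := hz y h1
      have p2 := hz _ h3
      have pz := hz z le_rfl
      have r := h.ray i c y
      have step : pd c p (y + Pi.single i (x i - z i)) * p y ≤
          pd c p y * p (y + Pi.single i (x i - z i)) := by
        rw [h.aff, h.aff.pdd c]
        nlinarith [mul_le_mul_of_nonneg_left r hh]
      have := mul_le_mul_of_nonneg_right step pz.le
      have := mul_le_mul_of_nonneg_right h2 p2.le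
      refine le_of_mul_le_mul_right ?_ p1
      nlinarith
  have := (key Finset.univ).2
  have e : z + ∑ i, Pi.single i (x i - z i) = x := by
    funext j
    simp [Finset.sum_apply, Pi.single_apply]
  simpa only [e] using this

theorem quad_conv {f0 f1 f2 h0 h1 h2 δ : ℝ} (hδ : 0 < δ)
    (hpos : ∀ s, -δ ≤ s → 0 < f0 + f1 * s + f2 * s ^ 2)
    (hmono : f0 + f1 * (-δ) + f2 * (-δ) ^ 2 ≤ f0)
    (hW : ∀ s, 0 ≤ (h0 + h1 * s + h2 * s ^ 2) * (f1 + 2 * f2 * s)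
      - (f0 + f1 * s + f2 * s ^ 2) * (h1 + 2 * h2 * s))
    (hΦ : f1 ≤ (1 - 1 / δ) * f0) :
    (h0 - h1) * (f0 + f1 * (-δ) + f2 * (-δ) ^ 2) ≤
      (h0 + h1 * (-δ) + h2 * (-δ) ^ 2) * (f0 - f1) := by
  have hf0 : 0 < f0 := by have := hpos 0 (by linarith); simpa using this
  obtain ⟨V, hV⟩ : ∃ V, V = h0 * f1 - h1 * f0 := ⟨_, rfl⟩
  obtain ⟨E, hE⟩ : ∃ E, E = h0 * f2 - h2 * f0 := ⟨_, rfl⟩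
  have hV0 : 0 ≤ V := by have := hW 0; simp at this; linarith
  have hq : ∀ s, 0 ≤ V * (f0 - f2 * s ^ 2) + E * (2 * f0 * s + f1 * s ^ 2) := by
    intro s
    have := mul_nonneg hf0.le (hW s)
    have e : V * (f0 - f2 * s ^ 2) + E * (2 * f0 * s + f1 * s ^ 2) =
      f0 * ((h0 + h1 * s + h2 * s ^ 2) * (f1 + 2 * f2 * s)
      - (f0 + f1 * s + f2 * s ^ 2) * (h1 + 2 * h2 * s)) := by
      rw [hV, hE]; ring
    rw [e]; exact this
  have hg : 0 ≤ f1 - δ * f2 := by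
    have : 0 ≤ δ * (f1 - δ * f2) := by nlinarith
    exact nonneg_of_mul_nonneg_right this hδ
  have hmain : f0 * E ≤ V * (f1 - δ * f2) := by
    by_cases hE0 : E ≤ 0
    · nlinarith [mul_nonneg hV0 hg]
    push Not at hE0
    -- discriminant
    have hd : f0 * E ^ 2 - f1 * V * E + f2 * V ^ 2 ≤ 0 := by
      have := discrim_le_zero (a := f1 * E - f2 * V) (b := 2 * f0 * E) (c := V * f0) (by
        intro s
        have := hq s
        nlinarith)
      simp only [discrim] at this
      have h2 : 4 * f0 * (f0 * E ^ 2 - f1 * V * E + f2 * V ^ 2) ≤ 0 := by nlinarith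
      by_contra hc
      push Not at hc
      have := mul_pos (mul_pos (by norm_num : (0:ℝ) < 4) hf0) hc
      linarith
    have hVE : δ * E ≤ V := by
      by_contra hc
      push Not at hc
      have h3 := hpos (-(V / E)) (by
        rw [neg_le_neg_iff, div_le_iff₀ hE0]; exact hc.le)
      have h4 := mul_pos h3 (pow_pos hE0 2)
      have e : (f0 + f1 * (-(V / E)) + f2 * (-(V / E)) ^ 2) * E ^ 2 =
        f0 * E ^ 2 - f1 * V * E + f2 * V ^ 2 := by field_simp; ring
      linarith
    -- f0 E^2 ≤ V (f1 E - f2 V)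
    by_cases hf2 : 0 ≤ f2
    · have : E * (f0 * E) ≤ E * (V * (f1 - δ * f2)) := by
        nlinarith [mul_nonneg (mul_nonneg hV0 hf2) (sub_nonneg.2 hVE)]
      exact le_of_mul_le_mul_left this hE0
    · exfalso
      push Not at hf2
      have h5 := hpos (max 0 ((|f1| + f0 + 1) / (-f2) + 1)) (by
        refine le_trans (by linarith) (le_max_left _ _))
      have hs : 0 ≤ (|f1| + f0 + 1) / (-f2) := by
        apply div_nonneg <;> [positivity; linarith]
      rw [max_eq_right (by linarith)] at h5
      set s := (|f1| + f0 + 1) / (-f2) + 1 with hs'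
      have e : -f2 * s = |f1| + f0 + 1 + -f2 := by
        have : -f2 ≠ 0 := by linarith
        rw [hs', mul_add, mul_div_cancel₀ _ this, mul_one]
      have : f1 ≤ |f1| := le_abs_self _
      nlinarith
  -- convexity
  have hc : 0 ≤ f0 ^ 2 * (h0 + h1 * (-δ) + h2 * (-δ) ^ 2) -
      (f0 + f1 * (-δ) + f2 * (-δ) ^ 2) * (h0 * f0 + δ * V) := by
    have e : f0 ^ 2 * (h0 + h1 * (-δ) + h2 * (-δ) ^ 2) -
      (f0 + f1 * (-δ) + f2 * (-δ) ^ 2) * (h0 * f0 + δ * V) =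
      δ ^ 2 * (V * (f1 - δ * f2) - f0 * E) := by
      rw [hV, hE]; ring
    rw [e]
    exact mul_nonneg (sq_nonneg _) (by linarith)
  have hfd : 0 < f0 + f1 * (-δ) + f2 * (-δ) ^ 2 := hpos _ le_rfl
  have hgap : f0 ≤ δ * (f0 - f1) := by
    have := mul_le_mul_of_nonneg_left hΦ hδ.le
    have e : δ * ((1 - 1 / δ) * f0) = δ * f0 - f0 := by field_simp
    linarith
  have hgap0 : 0 < f0 - f1 := by
    have : 0 < δ * (f0 - f1) := by linarith
    exact pos_of_mul_pos_right this hδ.le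
  set F := f0 + f1 * (-δ) + f2 * (-δ) ^ 2
  set H := h0 + h1 * (-δ) + h2 * (-δ) ^ 2
  have e1 : (h0 - h1) * f0 = h0 * (f0 - f1) + V := by rw [hV]; ring
  have h6 : V * f0 ≤ V * (δ * (f0 - f1)) := mul_le_mul_of_nonneg_left hgap hV0
  refine le_of_mul_le_mul_left (a := f0 ^ 2) ?_ (by positivity)
  calc f0 ^ 2 * ((h0 - h1) * F) = F * f0 * (h0 * (f0 - f1)) + F * (V * f0) := by
        rw [← sub_eq_zero]; linear_combination (f0 * F) * e1
    _ ≤ F * f0 * (h0 * (f0 - f1)) + F * (V * (δ * (f0 - f1))) := by gcongr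
    _ = (f0 - f1) * (F * (h0 * f0 + δ * V)) := by ring
    _ ≤ (f0 - f1) * (f0 ^ 2 * H) := by
        apply mul_le_mul_of_nonneg_left _ hgap0.le; linarith
    _ = f0 ^ 2 * (H * (f0 - f1)) := by ring

theorem MAff.two {p : (ι → ℝ) → ℝ} (h : MAff p) (i j : ι) (x : ι → ℝ) (a b s : ℝ) :
    p (x + Pi.single i (s * a) + Pi.single j (s * b)) =
      p x + (a * pd i p x + b * pd j p x) * s + (a * b * pd i (pd j p) x) * s ^ 2 := by
  rw [h, h, (h.pdd j) i]; ring

theorem MAff.two' {p : (ι → ℝ) → ℝ} (h : MAff p) (i j : ι) (x : ι → ℝ) (a b s : ℝ) :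
    a * pd i p (x + Pi.single i (s * a) + Pi.single j (s * b)) +
      b * pd j p (x + Pi.single i (s * a) + Pi.single j (s * b)) =
      (a * pd i p x + b * pd j p x) + 2 * (a * b * pd i (pd j p) x) * s := by
  rw [(h.pdd i).two, (h.pdd j).two, h.pd_self, h.pd_self]
  have e1 : pd i (pd i (pd j p)) x = 0 := (h.pdd j).pd_self i x
  have e2 : pd i (pd j (pd i p)) x = 0 := by rw [pd_comm j i]; exact e1
  have e3 : pd i (pd j (pd j p)) x = 0 := by
    rw [pd_comm i j, pd_comm i j]; exact (h.pdd i).pd_self j x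
  rw [e2, e3, pd_comm j i]; ring

/-- Barrier step. -/
theorem Ray.step {p : (ι → ℝ) → ℝ} (h : Ray p) {z z' : ι → ℝ} (hz : Above p z) {i j : ι}
    {a b δ : ℝ} (ha : 0 ≤ a) (hb : 0 ≤ b) (hδ : 0 < δ)
    (hΦ : a * pd i p z + b * pd j p z ≤ (1 - 1 / δ) * p z)
    (hz' : z' = z + Pi.single i (δ * a) + Pi.single j (δ * b)) :
    Above (TT a b i j p) z ∧ ∀ c, pd c (TT a b i j p) z' * p z ≤ pd c p z * TT a b i j p z' := by
  have hmon : ∀ x, z ≤ x → a * pd i p x + b * pd j p x ≤ (1 - 1 / δ) * p x := by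
    intro x hx
    have h1 := mul_le_mul_of_nonneg_left (h.mono hz hx i) ha
    have h2 := mul_le_mul_of_nonneg_left (h.mono hz hx j) hb
    have h3 := mul_le_mul_of_nonneg_right hΦ (hz x hx).le
    refine le_of_mul_le_mul_right ?_ (hz z le_rfl)
    nlinarith
  have hzz' : z ≤ z' := by
    rw [hz', add_assoc, le_add_iff_nonneg_right]
    exact add_nonneg (Pi.single_nonneg.2 (by positivity)) (Pi.single_nonneg.2 (by positivity))
  refine ⟨?_, ?_⟩
  · intro x hx
    have h1 := hmon x hx
    have h2 := hz x hx
    have h3 : 0 < 1 / δ * p x := by positivity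
    simp only [TT]; linarith
  · intro c
    have hback : z = z' + Pi.single i (-δ * a) + Pi.single j (-δ * b) := by
      rw [hz']; simp only [neg_mul, Pi.single_neg]; abel
    have hline : ∀ s, -δ ≤ s → z ≤ z' + Pi.single i (s * a) + Pi.single j (s * b) := by
      intro s hs
      have e : z' + Pi.single i (s * a) + Pi.single j (s * b) =
        z + (Pi.single i ((s + δ) * a) + Pi.single j ((s + δ) * b)) := by
        rw [hz']; simp only [add_mul, Pi.single_add]; abel
      rw [e, le_add_iff_nonneg_right]
      exact add_nonneg (Pi.single_nonneg.2 (mul_nonneg (by linarith) ha))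
        (Pi.single_nonneg.2 (mul_nonneg (by linarith) hb))
    have hc := h.aff.pdd c
    have main := quad_conv (f0 := p z') (f1 := a * pd i p z' + b * pd j p z')
      (f2 := a * b * pd i (pd j p) z') (h0 := pd c p z')
      (h1 := a * pd i (pd c p) z' + b * pd j (pd c p) z')
      (h2 := a * b * pd i (pd j (pd c p)) z') hδ ?_ ?_ ?_ (hmon z' hzz')
    · rw [← h.aff.two, ← hc.two, ← hback] at main
      rw [pd_TT]
      simp only [TT]
      linarith
    · intro s hs
      rw [← h.aff.two]
      exact hz _ (hline s hs)
    · rw [← h.aff.two, ← hback]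
      -- p z ≤ p z'
      have hq : ∀ k x, z ≤ x → 0 ≤ pd k p x := by
        intro k x hx
        by_contra hcon
        push Not at hcon
        have h1 := h.aff k x (p x / (-pd k p x))
        have h2 := hz (x + Pi.single k (p x / (-pd k p x))) (by
          refine hx.trans ?_
          rw [le_add_iff_nonneg_right]
          exact Pi.single_nonneg.2 (div_nonneg (hz x hx).le (by linarith)))
        have e : p x / (-pd k p x) * pd k p x = - p x := by
          have : pd k p x ≠ 0 := hcon.ne
          field_simp
        rw [h1, e] at h2
        linarith
      rw [hz', h.aff, h.aff i z]
      have h1 := mul_nonneg (mul_nonneg hδ.le ha) (hq i z le_rfl)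
      have h2 := mul_nonneg (mul_nonneg hδ.le hb) (hq j (z + Pi.single i (δ * a)) (by
        rw [le_add_iff_nonneg_right]
        exact Pi.single_nonneg.2 (by positivity)))
      linarith
    · intro s
      rw [← h.aff.two, ← hc.two, ← h.aff.two', ← hc.two']
      set x := z' + Pi.single i (s * a) + Pi.single j (s * b)
      have h1 := mul_le_mul_of_nonneg_left (h.ray i c x) ha
      have h2 := mul_le_mul_of_nonneg_left (h.ray j c x) hb
      nlinarith

section lists
variable {κ : Type*} [Fintype κ] [DecidableEq κ]

/-- Apply the averaged operators for all indices in a list. -/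
def PP (w : κ × Bool → ℝ) (l : List κ) (p : (κ × Bool → ℝ) → ℝ) : (κ × Bool → ℝ) → ℝ :=
  match l with
  | [] => p
  | k :: l => TT (w (k, true)) (w (k, false)) (k, true) (k, false) (PP w l p)

theorem PP_comm (w : κ × Bool → ℝ) (l : List κ) (p : (κ × Bool → ℝ) → ℝ) (a b : ℝ)
    (i j : κ × Bool) : PP w l (TT a b i j p) = TT a b i j (PP w l p) := by
  induction l with
  | nil => rfl
  | cons k l ih => simp only [PP]; rw [ih, TT_comm]

theorem PP_stab {w : κ × Bool → ℝ} (hw : ∀ c, 0 ≤ w c) (l : List κ) {p : (κ × Bool → ℝ) → ℝ}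
    (hp : RStab p) : RStab (PP w l p) := by
  induction l with
  | nil => exact hp
  | cons k l ih => exact ih.tt (hw _) (hw _) _ _

/-- All suffixes are above the origin. -/
def Inv (w : κ × Bool → ℝ) (l : List κ) (p : (κ × Bool → ℝ) → ℝ) : Prop :=
  match l with
  | [] => Above p 0
  | k :: l => Above (PP w (k :: l) p) 0 ∧ Inv w l p

theorem Inv.head {w : κ × Bool → ℝ} {l : List κ} {p : (κ × Bool → ℝ) → ℝ} (h : Inv w l p) :
    Above (PP w l p) 0 := by
  cases l with
  | nil => exact h
  | cons k l => exact h.1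

theorem descend {w : κ × Bool → ℝ} (hw : ∀ c, 0 ≤ w c) (l : List κ) {p : (κ × Bool → ℝ) → ℝ}
    (hp : RStab p) (h : Inv w l p) (c : κ × Bool)
    (ha : Above (TT 1 0 c c (PP w l p)) 0) : Inv w l (TT 1 0 c c p) := by
  induction l with
  | nil => exact ha
  | cons j l ih =>
    refine ⟨by rw [PP_comm]; exact ha, ih h.2 ?_⟩
    have hg : Ray (PP w l p) := (PP_stab hw l hp).ray
    have h1 := h.2.head
    have h2 := h.1
    simp only [PP] at ha h2
    set g := PP w l p
    intro x hx
    have a1 := h1 x hx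
    have a2 := h2 x hx
    have a3 := ha x hx
    have e1 : TT 1 0 c c (TT (w (j, true)) (w (j, false)) (j, true) (j, false) g) x =
      (g x - w (j, true) * pd (j, true) g x - w (j, false) * pd (j, false) g x) -
      (pd c g x - w (j, true) * pd (j, true) (pd c g) x
        - w (j, false) * pd (j, false) (pd c g) x) := by
      rw [← pd_TT]; simp only [TT]; ring
    rw [e1] at a3
    simp only [TT] at a2 ⊢
    have r1 := mul_le_mul_of_nonneg_left (hg.ray (j, true) c x) (hw (j, true))
    have r2 := mul_le_mul_of_nonneg_left (hg.ray (j, false) c x) (hw (j, false))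
    have a4 := mul_pos a1 a3
    have : 0 < (g x - w (j, true) * pd (j, true) g x - w (j, false) * pd (j, false) g x) *
      (g x - pd c g x) := by nlinarith
    have := pos_of_mul_pos_right this a2.le
    linarith

/-- Translate by the chosen unit vectors. -/
def QQ (s : κ → Bool) (l : List κ) (p : (κ × Bool → ℝ) → ℝ) : (κ × Bool → ℝ) → ℝ :=
  match l with
  | [] => p
  | k :: l => QQ s l (TT 1 0 (k, s k) (k, s k) p)

theorem QQ_congr {s s' : κ → Bool} (l : List κ) (h : ∀ k ∈ l, s k = s' k)
    (p : (κ × Bool → ℝ) → ℝ) : QQ s l p = QQ s' l p := by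
  induction l generalizing p with
  | nil => rfl
  | cons k l ih =>
    simp only [QQ]
    rw [h k (by simp), ih (fun k hk => h k (by simp [hk]))]

theorem choose_signs {w : κ × Bool → ℝ} (hw : ∀ c, 0 ≤ w c)
    (hw1 : ∀ k, w (k, true) + w (k, false) = 1) (l : List κ) (hl : l.Nodup)
    {p : (κ × Bool → ℝ) → ℝ} (hp : RStab p) (h : Inv w l p) :
    ∃ s : κ → Bool, Above (QQ s l p) 0 := by
  induction l generalizing p with
  | nil => exact ⟨fun _ => true, h⟩
  | cons k l ih =>
    have hg : Ray (PP w l p) := (PP_stab hw l hp).ray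
    have h1 := h.2.head
    have h2 := h.1
    have : ∃ b : Bool, Above (TT 1 0 (k, b) (k, b) (PP w l p)) 0 := by
      simp only [PP] at h2
      set g := PP w l p
      have h3 := h2 0 le_rfl
      have g0 := h1 0 le_rfl
      have : ∃ b : Bool, 0 < g 0 - pd (k, b) g 0 := by
        by_contra hcon
        push Not at hcon
        have n1 := mul_nonpos_of_nonneg_of_nonpos (hw (k, true)) (hcon true)
        have n2 := mul_nonpos_of_nonneg_of_nonpos (hw (k, false)) (hcon false)
        simp only [TT] at h3
        have : g 0 = (w (k, true) + w (k, false)) * g 0 := by rw [hw1, one_mul]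
        nlinarith
      obtain ⟨b, hb⟩ := this
      refine ⟨b, ?_⟩
      intro x hx
      have gx := h1 x hx
      have m := hg.mono h1 hx (k, b)
      have := mul_pos hb gx
      have : 0 < (g x - pd (k, b) g x) * g 0 := by nlinarith
      have := pos_of_mul_pos_left this g0.le
      simp only [TT]; linarith
    obtain ⟨b, hb⟩ := this
    have hkl := (List.nodup_cons.1 hl)
    obtain ⟨s, hs⟩ := ih hkl.2 (hp.tt zero_le_one le_rfl (k, b) (k, b))
      (descend hw l hp h.2 (k, b) hb)
    refine ⟨Function.update s k b, ?_⟩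
    simp only [QQ, Function.update_self]
    rw [QQ_congr l (s' := s)]
    · exact hs
    · intro j hj
      rw [Function.update_of_ne]
      rintro rfl
      exact hkl.1 hj

/-- The barrier points. -/
def zz (w : κ × Bool → ℝ) (δ : ℝ) (l : List κ) : κ × Bool → ℝ :=
  fun c => if c.1 ∈ l then 0 else - (δ * w c)

theorem barrier {w : κ × Bool → ℝ} (hw : ∀ c, 0 ≤ w c) {δ : ℝ} (hδ : 0 < δ)
    {p : (κ × Bool → ℝ) → ℝ} (hp : RStab p) (h0 : Above p (zz w δ []))
    (hΦ : ∀ k, w (k, true) * pd (k, true) p (zz w δ []) +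
      w (k, false) * pd (k, false) p (zz w δ []) ≤ (1 - 1 / δ) * p (zz w δ []))
    (l : List κ) (hl : l.Nodup) :
    Above (PP w l p) (zz w δ l) ∧
    ∀ k, k ∉ l → w (k, true) * pd (k, true) (PP w l p) (zz w δ l) +
      w (k, false) * pd (k, false) (PP w l p) (zz w δ l) ≤ (1 - 1 / δ) * PP w l p (zz w δ l) := by
  induction l with
  | nil => exact ⟨h0, fun k _ => hΦ k⟩
  | cons k l ih =>
    have hkl := (List.nodup_cons.1 hl)
    obtain ⟨i1, i2⟩ := ih hkl.2
    have hg : Ray (PP w l p) := (PP_stab hw l hp).ray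
    have hz' : zz w δ (k :: l) = zz w δ l + Pi.single (k, true) (δ * w (k, true))
        + Pi.single (k, false) (δ * w (k, false)) := by
      funext ⟨j, b⟩
      by_cases hj : j = k
      · subst hj
        cases b <;> simp [zz, hkl.1, Pi.single_apply]
      · simp [zz, hj, Pi.single_apply]
    obtain ⟨s1, s2⟩ := hg.step i1 (hw _) (hw _) hδ (i2 k hkl.1) hz'
    have hle : zz w δ l ≤ zz w δ (k :: l) := by
      rw [hz', add_assoc, le_add_iff_nonneg_right]
      exact add_nonneg (Pi.single_nonneg.2 (mul_nonneg hδ.le (hw _)))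
        (Pi.single_nonneg.2 (mul_nonneg hδ.le (hw _)))
    have hab : Above (PP w (k :: l) p) (zz w δ (k :: l)) := fun x hx => s1 x (hle.trans hx)
    refine ⟨hab, ?_⟩
    intro j hj
    have hjl : j ∉ l := fun h => hj (by simp [h])
    have t1 := mul_le_mul_of_nonneg_left (s2 (j, true)) (hw (j, true))
    have t2 := mul_le_mul_of_nonneg_left (s2 (j, false)) (hw (j, false))
    have q := hab _ le_rfl
    have pz := i1 _ le_rfl
    have t3 := mul_le_mul_of_nonneg_right (i2 j hjl) q.le
    simp only [PP] at q t3 ⊢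
    refine le_of_mul_le_mul_right ?_ pz
    nlinarith

theorem barrier_inv {w : κ × Bool → ℝ} (hw : ∀ c, 0 ≤ w c) {δ : ℝ} (hδ : 0 < δ)
    {p : (κ × Bool → ℝ) → ℝ} (hp : RStab p) (h0 : Above p (zz w δ []))
    (hΦ : ∀ k, w (k, true) * pd (k, true) p (zz w δ []) +
      w (k, false) * pd (k, false) p (zz w δ []) ≤ (1 - 1 / δ) * p (zz w δ []))
    (l : List κ) (hl : l.Nodup) : Inv w l p := by
  have hab : ∀ l : List κ, l.Nodup → Above (PP w l p) 0 := by
    intro l hl x hx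
    refine (barrier hw hδ hp h0 hΦ l hl).1 x (le_trans ?_ hx)
    intro c
    simp only [zz]
    split_ifs
    · simp
    · simp only [Pi.zero_apply, neg_nonpos]; exact mul_nonneg hδ.le (hw _)
  induction l with
  | nil => exact hab [] hl
  | cons k l ih => exact ⟨hab _ hl, ih (List.nodup_cons.1 hl).2⟩

theorem QQ_eq (s : κ → Bool) (l : List κ) (hl : l.Nodup) {p : (κ × Bool → ℝ) → ℝ} (hp : MAff p) :
    ∀ x, QQ s l p x = p (x - fun c => if c.1 ∈ l ∧ c.2 = s c.1 then 1 else 0) := by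
  induction l generalizing p with
  | nil => intro x; simp [QQ]; congr 1; funext c; simp
  | cons k l ih =>
    intro x
    have hkl := (List.nodup_cons.1 hl)
    simp only [QQ]
    rw [ih hkl.2 (hp.tt _ _ _ _)]
    have e : ∀ y, TT 1 0 (k, s k) (k, s k) p y = p (y + Pi.single (k, s k) (-1)) := by
      intro y; rw [hp]; simp only [TT]; ring
    rw [e]
    congr 1
    funext ⟨j, b⟩
    by_cases hj : j = k
    · subst hj
      by_cases hb : b = s j
      · simp [hkl.1, hb]; ring
      · simp [hb]
    · simp [hj, Pi.single_apply]

/-- Abstract conclusion. -/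
theorem abstract_main {w : κ × Bool → ℝ} (hw : ∀ c, 0 ≤ w c)
    (hw1 : ∀ k, w (k, true) + w (k, false) = 1) {δ : ℝ} (hδ : 0 < δ)
    {p : (κ × Bool → ℝ) → ℝ} (hp : RStab p) (h0 : ∀ x, (∀ c, - (δ * w c) ≤ x c) → 0 < p x)
    (hΦ : ∀ k, w (k, true) * pd (k, true) p (fun c => - (δ * w c)) +
      w (k, false) * pd (k, false) p (fun c => - (δ * w c)) ≤
        (1 - 1 / δ) * p (fun c => - (δ * w c))) :
    ∃ s : κ → Bool, ∀ x : κ × Bool → ℝ, (∀ c, 0 ≤ x c) →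
      0 < p (fun c => x c - if c.2 = s c.1 then 1 else 0) := by
  have e : zz w δ [] = fun c => - (δ * w c) := by funext c; simp [zz]
  have inv := barrier_inv hw hδ hp (by rw [e]; exact fun x hx => h0 x hx) (by rw [e]; exact hΦ)
    Finset.univ.toList (Finset.nodup_toList _)
  obtain ⟨s, hs⟩ := choose_signs hw hw1 _ (Finset.nodup_toList _) hp inv
  refine ⟨s, fun x hx => ?_⟩
  have := hs x hx
  rw [QQ_eq _ _ (Finset.nodup_toList _) hp.ray.aff] at this
  simp only [Finset.mem_toList, Finset.mem_univ, true_and] at this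
  exact this

end lists

end KS

namespace KS
open Matrix

section mat
variable {d m : ℕ}

/-- Squared Euclidean length. -/
def nn (y : Fin d → ℂ) : ℝ := ∑ i, Complex.normSq (y i)

/-- Squared modulus of the inner product. -/
def ss (u : EuclideanSpace ℂ (Fin d)) (y : Fin d → ℂ) : ℝ :=
  Complex.normSq (∑ j, starRingEnd ℂ (u j) * y j)

theorem outer_eq (u : EuclideanSpace ℂ (Fin d)) :
    outer u = vecMulVec u (star (u : Fin d → ℂ)) := by
  ext i j; simp [outer, vecMulVec_apply]

theorem outer_herm (u : EuclideanSpace ℂ (Fin d)) : (outer u).IsHermitian := by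
  ext i j; simp [outer, mul_comm]

theorem quad_outer (u : EuclideanSpace ℂ (Fin d)) (y : Fin d → ℂ) :
    star y ⬝ᵥ (outer u *ᵥ y) = (ss u y : ℂ) := by
  rw [ss, Complex.normSq_eq_conj_mul_self, map_sum, outer_eq]
  simp only [dotProduct, mulVec, vecMulVec_apply, Pi.star_apply, RCLike.star_def, map_mul,
    Complex.conj_conj]
  rw [Finset.sum_mul]
  refine Finset.sum_congr rfl fun i _ => ?_
  rw [Finset.mul_sum, Finset.mul_sum]
  refine Finset.sum_congr rfl fun j _ => ?_
  ring

theorem quad_one (y : Fin d → ℂ) : star y ⬝ᵥ y = (nn y : ℂ) := by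
  simp [dotProduct, nn, Complex.normSq_eq_conj_mul_self]

theorem nn_nonneg (y : Fin d → ℂ) : 0 ≤ nn y :=
  Finset.sum_nonneg fun _ _ => Complex.normSq_nonneg _

theorem nn_pos {y : Fin d → ℂ} (h : y ≠ 0) : 0 < nn y := by
  obtain ⟨i, hi⟩ := Function.ne_iff.1 h
  exact Finset.sum_pos' (fun _ _ => Complex.normSq_nonneg _) ⟨i, by simp, Complex.normSq_pos.2 hi⟩

theorem ss_nonneg (u : EuclideanSpace ℂ (Fin d)) (y : Fin d → ℂ) : 0 ≤ ss u y :=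
  Complex.normSq_nonneg _

/-- The matrix `θ + ∑ c_i u_i u_i*`. -/
noncomputable def DM (θ : ℝ) (u : Fin m → EuclideanSpace ℂ (Fin d)) (c : Fin m → ℂ) :
    Matrix (Fin d) (Fin d) ℂ := (θ : ℂ) • 1 + ∑ i, c i • outer (u i)

theorem quad_DM (θ : ℝ) (u : Fin m → EuclideanSpace ℂ (Fin d)) (c : Fin m → ℂ) (y : Fin d → ℂ) :
    star y ⬝ᵥ (DM θ u c *ᵥ y) = θ * nn y + ∑ i, c i * (ss (u i) y : ℂ) := by
  rw [DM, add_mulVec, sum_mulVec, dotProduct_add, dotProduct_sum]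
  simp only [smul_mulVec, dotProduct_smul, quad_outer, one_mulVec, quad_one, smul_eq_mul]

/-- Real quadratic form. -/
def qf (θ : ℝ) (u : Fin m → EuclideanSpace ℂ (Fin d)) (c : Fin m → ℝ) (y : Fin d → ℂ) : ℝ :=
  θ * nn y + ∑ i, c i * ss (u i) y

theorem quad_DM_real (θ : ℝ) (u : Fin m → EuclideanSpace ℂ (Fin d)) (c : Fin m → ℝ)
    (y : Fin d → ℂ) :
    star y ⬝ᵥ (DM θ u (fun i => (c i : ℂ)) *ᵥ y) = (qf θ u c y : ℂ) := by
  rw [quad_DM, qf]; push_cast; rfl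

theorem DM_herm (θ : ℝ) (u : Fin m → EuclideanSpace ℂ (Fin d)) (c : Fin m → ℝ) :
    (DM θ u (fun i => (c i : ℂ))).IsHermitian := by
  unfold DM IsHermitian
  rw [conjTranspose_add, conjTranspose_sum, conjTranspose_smul, conjTranspose_one]
  congr 1
  · simp
  · refine Finset.sum_congr rfl fun i _ => ?_
    rw [conjTranspose_smul, (outer_herm (u i)).eq]; simp

theorem det_rank_one (B : Matrix (Fin d) (Fin d) ℂ) (u : EuclideanSpace ℂ (Fin d)) :
    ∃ α β : ℂ, ∀ w : ℂ, (B + w • outer u).det = α + w * β := by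
  let M : Matrix (Unit ⊕ Fin d) (Unit ⊕ Fin d) ℂ :=
    fromBlocks 1 0 (replicateCol Unit (u : Fin d → ℂ)) B
  let r0 : Unit ⊕ Fin d → ℂ := Sum.elim (fun _ => 1) (fun _ => 0)
  let r1 : Unit ⊕ Fin d → ℂ := Sum.elim (fun _ => 0) (fun j => - star (u j))
  refine ⟨(M.updateRow (Sum.inl ()) r0).det, (M.updateRow (Sum.inl ()) r1).det, fun w => ?_⟩
  rw [← det_updateRow_smul, ← det_updateRow_add]
  have e : M.updateRow (Sum.inl ()) (r0 + w • r1) =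
      fromBlocks 1 (replicateRow Unit (-(w • star (u : Fin d → ℂ))))
        (replicateCol Unit (u : Fin d → ℂ)) B := by
    ext (i | i) (j | j) <;> simp [M, r0, r1, updateRow_apply]
  rw [e, det_fromBlocks_one₁₁]
  congr 1
  ext i j
  simp [outer, mul_apply]
  ring

theorem DM_add (θ : ℝ) (u : Fin m → EuclideanSpace ℂ (Fin d)) (c : Fin m → ℂ) (i : Fin m) (w : ℂ) :
    DM θ u (c + Pi.single i w) = DM θ u c + w • outer (u i) := by
  simp only [DM, Pi.add_apply, add_smul, Finset.sum_add_distrib, add_assoc]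
  congr 2
  rw [Finset.sum_eq_single i]
  · simp
  · intro j _ hj; simp [hj]
  · simp

theorem DM_maff (θ : ℝ) (u : Fin m → EuclideanSpace ℂ (Fin d)) :
    MAff (fun c => (DM θ u c).det) := by
  intro i c w
  obtain ⟨α, β, h⟩ := det_rank_one (DM θ u c) (u i)
  have h0 := h 0
  have h1 := h 1
  have hw := h w
  simp only [pd, DM_add]
  rw [hw, h1]
  simp only [zero_smul, add_zero, zero_mul] at h0
  rw [h0]; ring

theorem DM_cont (θ : ℝ) (u : Fin m → EuclideanSpace ℂ (Fin d)) :
    Continuous (fun c => (DM θ u c).det) := by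
  unfold DM
  apply Continuous.matrix_det
  fun_prop

theorem DM_stab {θ : ℝ} (hθ : 0 < θ) (u : Fin m → EuclideanSpace ℂ (Fin d)) (c : Fin m → ℂ)
    (hc : ∀ i, 0 < (c i).im) : (DM θ u c).det ≠ 0 := by
  intro h0
  obtain ⟨y, hy, h⟩ := exists_mulVec_eq_zero_iff.2 h0
  have q := quad_DM θ u c y
  rw [h, dotProduct_zero] at q
  have him := congrArg Complex.im q
  have hre := congrArg Complex.re q
  simp only [Complex.zero_im, Complex.add_im, Complex.im_sum, Complex.zero_re, Complex.add_re,
    Complex.re_sum, Complex.im_mul_ofReal, Complex.re_mul_ofReal, Complex.ofReal_im, zero_mul,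
    zero_add, Complex.ofReal_re] at him hre
  have hall := (Finset.sum_eq_zero_iff_of_nonneg
    (fun i _ => mul_nonneg (hc i).le (ss_nonneg (u i) y))).1 him.symm
  have : ∑ i, (c i).re * ss (u i) y = 0 := by
    refine Finset.sum_eq_zero fun i hi => ?_
    rcases mul_eq_zero.1 (hall i hi) with h | h
    · exact absurd h (hc i).ne'
    · rw [h, mul_zero]
  rw [this, add_zero] at hre
  exact absurd hre (mul_pos hθ (nn_pos hy)).ne

/-- The real determinant. -/
noncomputable def rdet (θ : ℝ) (u : Fin m → EuclideanSpace ℂ (Fin d)) (c : Fin m → ℝ) : ℝ :=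
  (DM θ u (fun i => (c i : ℂ))).det.re

theorem rdet_eq (θ : ℝ) (u : Fin m → EuclideanSpace ℂ (Fin d)) (c : Fin m → ℝ) :
    (DM θ u (fun i => (c i : ℂ))).det = (rdet θ u c : ℂ) := by
  have h := DM_herm θ u c
  have : starRingEnd ℂ (DM θ u (fun i => (c i : ℂ))).det = (DM θ u (fun i => (c i : ℂ))).det := by
    conv_rhs => rw [← h.eq, det_conjTranspose]
    rfl
  rw [rdet]; exact (Complex.conj_eq_iff_re.1 this).symm

theorem DM_pd {θ σ : ℝ} (hσ : 0 < σ) (u : Fin m → EuclideanSpace ℂ (Fin d)) (c : Fin m → ℝ)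
    (h : ∀ y, σ * nn y ≤ qf θ u c y) : (DM θ u (fun i => (c i : ℂ))).PosDef := by
  refine PosDef.of_dotProduct_mulVec_pos (DM_herm θ u c) fun y hy => ?_
  rw [quad_DM_real]
  have := mul_pos hσ (nn_pos hy)
  exact_mod_cast lt_of_lt_of_le this (h y)

theorem rdet_pos {θ σ : ℝ} (hσ : 0 < σ) (u : Fin m → EuclideanSpace ℂ (Fin d)) (c : Fin m → ℝ)
    (h : ∀ y, σ * nn y ≤ qf θ u c y) : 0 < rdet θ u c := by
  have := (DM_pd hσ u c h).det_pos
  rw [rdet_eq] at this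
  exact_mod_cast this

theorem cs (u : EuclideanSpace ℂ (Fin d)) (y : Fin d → ℂ) : ss u y ≤ ‖u‖ ^ 2 * nn y := by
  have h := norm_inner_le_norm (𝕜 := ℂ) u (WithLp.toLp 2 y)
  have h2 := mul_self_le_mul_self (norm_nonneg _) h
  have e1 : ss u y = ‖inner ℂ u (WithLp.toLp 2 y)‖ * ‖inner ℂ u (WithLp.toLp 2 y)‖ := by
    rw [ss, Complex.normSq_eq_norm_sq, sq]
    have : (∑ j, starRingEnd ℂ (u j) * y j) = inner ℂ u (WithLp.toLp 2 y) := by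
      simp [PiLp.inner_apply, mul_comm]
    rw [this]
  have e2 : nn y = ‖(WithLp.toLp 2 y : EuclideanSpace ℂ (Fin d))‖ ^ 2 := by
    rw [EuclideanSpace.norm_sq_eq]; simp [nn, Complex.normSq_eq_norm_sq]
  rw [e1, e2]; nlinarith

theorem rdet_barrier {θ σ ε : ℝ} (hσ : 0 < σ) (u : Fin m → EuclideanSpace ℂ (Fin d))
    (c : Fin m → ℝ) (h : ∀ y, σ * nn y ≤ qf θ u c y) (k : Fin m) (hk : ‖u k‖ ^ 2 ≤ ε) :
    rdet θ u (c + Pi.single k 1) - rdet θ u c ≤ (ε / σ) * rdet θ u c := by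
  have hpd := DM_pd hσ u c h
  have hpos := rdet_pos hσ u c h
  set A := DM θ u (fun i => (c i : ℂ)) with hA
  have hunit : IsUnit A.det := (hpd.det_pos.ne').isUnit
  have e1 : DM θ u (fun i => (((c + Pi.single k 1 : Fin m → ℝ) i : ℝ) : ℂ)) = A + outer (u k) := by
    have := DM_add θ u (fun i => (c i : ℂ)) k 1
    rw [one_smul] at this
    rw [hA, ← this]
    congr 1
    exact (cx_add_single c k 1).trans (by simp; rfl)
  set y : Fin d → ℂ := A⁻¹ *ᵥ (u k) with hy
  have hAy : A *ᵥ y = u k := by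
    rw [hy, mulVec_mulVec, mul_nonsing_inv _ hunit, one_mulVec]
  have e2 : (A + outer (u k)).det = A.det * (1 + star (u k : Fin d → ℂ) ⬝ᵥ y) := by
    have := det_add_replicateCol_mul_replicateRow (ι := Unit) hunit (u k : Fin d → ℂ)
      (star (u k : Fin d → ℂ))
    have e3 : replicateCol Unit (u k : Fin d → ℂ) * replicateRow Unit (star (u k : Fin d → ℂ)) =
      outer (u k) := by
      ext i j; simp [outer, mul_apply]
    rw [e3] at this
    rw [this]
    congr 1
    rw [det_unique, Matrix.mul_assoc]
    simp only [Matrix.add_apply, Matrix.one_apply_eq]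
    congr 1
  have e4 : star (u k : Fin d → ℂ) ⬝ᵥ y = (qf θ u c y : ℂ) := by
    rw [← quad_DM_real, ← hA, hAy]
    have h1 : star (star (u k : Fin d → ℂ) ⬝ᵥ y) = star y ⬝ᵥ (u k : Fin d → ℂ) := by
      rw [star_dotProduct, star_star]
      try rfl
    have h2 : star (star y ⬝ᵥ (A *ᵥ y)) = star y ⬝ᵥ (A *ᵥ y) := by
      rw [quad_DM_real]; simp
    rw [hAy] at h2
    rw [← h2, ← h1, star_star]
  have e5 : rdet θ u (c + Pi.single k 1) = rdet θ u c * (1 + qf θ u c y) := by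
    have : ((rdet θ u (c + Pi.single k 1) : ℝ) : ℂ) = ((rdet θ u c * (1 + qf θ u c y) : ℝ) : ℂ) := by
      rw [← rdet_eq, e1, e2, e4, hA, rdet_eq]; push_cast; rfl
    exact_mod_cast this
  have hq : qf θ u c y ≤ ε / σ := by
    set Q := qf θ u c y
    have hs : ss (u k) y = Q ^ 2 := by
      have : (∑ j, starRingEnd ℂ (u k j) * y j) = (Q : ℂ) := by
        rw [← e4]; simp [dotProduct]
      rw [ss, this, Complex.normSq_ofReal, sq]
    have h1 := cs (u k) y
    have h2 := h y
    rw [hs] at h1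
    have n0 := nn_nonneg y
    have hε : 0 ≤ ε := le_trans (by positivity) hk
    rw [le_div_iff₀ hσ]
    by_contra hcon
    push Not at hcon
    have hQ : 0 < Q := by
      by_contra hQ
      push Not at hQ
      nlinarith
    have h3 : Q ^ 2 ≤ ε * nn y := h1.trans (mul_le_mul_of_nonneg_right hk n0)
    have h4 : Q * (Q * σ) ≤ ε * Q := by nlinarith
    nlinarith
  rw [e5]
  nlinarith

theorem nn_smul (a : ℝ) (y : Fin d → ℂ) : nn ((a : ℂ) • y) = a ^ 2 * nn y := by
  simp only [nn, Pi.smul_apply, smul_eq_mul, Complex.normSq_mul, Complex.normSq_ofReal]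
  rw [Finset.mul_sum]; refine Finset.sum_congr rfl fun _ _ => by ring

theorem ss_smul (u : EuclideanSpace ℂ (Fin d)) (a : ℝ) (y : Fin d → ℂ) :
    ss u ((a : ℂ) • y) = a ^ 2 * ss u y := by
  have : (∑ j, starRingEnd ℂ (u j) * ((a : ℂ) • y) j) = a * ∑ j, starRingEnd ℂ (u j) * y j := by
    rw [Finset.mul_sum]; refine Finset.sum_congr rfl fun _ _ => by simp; ring
  rw [ss, this, Complex.normSq_mul, Complex.normSq_ofReal, ss]; ring

theorem qf_smul (θ : ℝ) (u : Fin m → EuclideanSpace ℂ (Fin d)) (c : Fin m → ℝ) (a : ℝ)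
    (y : Fin d → ℂ) : qf θ u c ((a : ℂ) • y) = a ^ 2 * qf θ u c y := by
  simp only [qf, nn_smul, ss_smul, mul_add, Finset.mul_sum]
  congr 1
  · ring
  · refine Finset.sum_congr rfl fun _ _ => by ring

theorem qf_shift (θ : ℝ) (u : Fin m → EuclideanSpace ℂ (Fin d)) (c : Fin m → ℝ) (a : ℝ)
    (y : Fin d → ℂ) : qf θ u (fun i => c i + a) y = qf θ u c y + a * ∑ i, ss (u i) y := by
  simp only [qf, add_mul, Finset.sum_add_distrib, Finset.mul_sum, add_assoc]

theorem qf_nonneg_of_rdet {θ : ℝ} (hθ : 0 < θ) (u : Fin m → EuclideanSpace ℂ (Fin d))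
    (c : Fin m → ℝ) (hc : ∀ i, -1 ≤ c i) (h : ∀ c', (∀ i, c i ≤ c' i) → rdet θ u c' ≠ 0)
    (y : Fin d → ℂ) : 0 ≤ qf θ u c y := by
  by_contra hneg
  push Not at hneg
  have hy : y ≠ 0 := by
    rintro rfl
    simp [qf, nn, ss] at hneg
  set c1 : Fin m → ℝ := fun i => c i + 1 with hc1
  have hlow : ∀ y, θ * nn y ≤ qf θ u c1 y := by
    intro y
    simp only [qf, hc1]
    have : 0 ≤ ∑ i, (c i + 1) * ss (u i) y :=
      Finset.sum_nonneg fun i _ => mul_nonneg (by linarith [hc i]) (ss_nonneg _ _)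
    linarith
  let S : Set (EuclideanSpace ℂ (Fin d)) := Metric.sphere 0 1
  have hS : IsCompact S := isCompact_sphere _ _
  have hnn : ∀ x : EuclideanSpace ℂ (Fin d), nn (x : Fin d → ℂ) = ‖x‖ ^ 2 := by
    intro x
    rw [EuclideanSpace.norm_sq_eq]; simp [nn, Complex.normSq_eq_norm_sq]
  let g : EuclideanSpace ℂ (Fin d) → ℝ := fun x => (∑ i, ss (u i) x) / qf θ u c1 x
  have hcs : ∀ i, Continuous fun x : EuclideanSpace ℂ (Fin d) => ss (u i) x := by
    intro i; unfold ss
    have := Complex.continuous_normSq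
    fun_prop
  have hcn : Continuous fun x : EuclideanSpace ℂ (Fin d) => nn (x : Fin d → ℂ) := by
    simp only [hnn]; fun_prop
  have hqpos : ∀ x ∈ S, 0 < qf θ u c1 x := by
    intro x hx
    have h1 := hlow x
    have hx1 : ‖x‖ = 1 := by simpa [S] using hx
    rw [hnn, hx1] at h1
    linarith
  have hg : ContinuousOn g S := by
    apply ContinuousOn.div
    · exact (continuous_finset_sum _ fun i _ => hcs i).continuousOn
    · unfold qf
      exact ((continuous_const.mul hcn).add
        (continuous_finset_sum _ fun i _ => continuous_const.mul (hcs i))).continuousOn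
    · exact fun x hx => (hqpos x hx).ne'
  -- normalized vector
  have hnorm : ∀ v : Fin d → ℂ, v ≠ 0 → ∃ x ∈ S, ∃ a : ℝ, 0 < a ∧ (x : Fin d → ℂ) = (a : ℂ) • v := by
    intro v hv
    set V : EuclideanSpace ℂ (Fin d) := WithLp.toLp 2 v with hV
    have hV0 : V ≠ 0 := by
      intro h0; apply hv
      have := congrArg WithLp.ofLp h0
      simpa [hV] using this
    have hn : 0 < ‖V‖ := norm_pos_iff.2 hV0
    refine ⟨((‖V‖⁻¹ : ℝ) : ℂ) • V, ?_, ‖V‖⁻¹, by positivity, ?_⟩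
    · simp [S, norm_smul, hn.ne']
    · rw [hV]; rfl
  obtain ⟨x0, hx0, a0, ha0, hxa⟩ := hnorm y hy
  obtain ⟨x1, hx1, hmax⟩ := hS.exists_isMaxOn ⟨x0, hx0⟩ hg
  have hx0neg : qf θ u c x0 < 0 := by
    rw [hxa, qf_smul]; exact mul_neg_of_pos_of_neg (by positivity) hneg
  have hg0 : 1 < g x0 := by
    rw [lt_div_iff₀ (hqpos x0 hx0), qf_shift]; linarith
  have hg1 : 1 < g x1 := lt_of_lt_of_le hg0 (hmax hx0)
  set μ := g x1 with hμ
  have hμ0 : 0 < μ := by linarith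
  set c2 : Fin m → ℝ := fun i => c1 i + (-(1 / μ)) with hc2
  have hS2 : ∀ x ∈ S, 0 ≤ qf θ u c2 x := by
    intro x hx
    have h1 : g x ≤ μ := hmax hx
    rw [div_le_iff₀ (hqpos x hx)] at h1
    rw [qf_shift]
    have : 1 / μ * ∑ i, ss (u i) x ≤ qf θ u c1 x := by
      rw [one_div, inv_mul_le_iff₀ hμ0]; exact h1
    linarith
  have hall : ∀ v, 0 ≤ qf θ u c2 v := by
    intro v
    by_cases hv : v = 0
    · subst hv; simp [qf, nn, ss]
    obtain ⟨x, hx, a, ha, hxa⟩ := hnorm v hv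
    have := hS2 x hx
    rw [hxa, qf_smul] at this
    exact nonneg_of_mul_nonneg_right this (by positivity)
  have hz : qf θ u c2 x1 = 0 := by
    rw [qf_shift]
    have : ∑ i, ss (u i) x1 = μ * qf θ u c1 x1 := by
      rw [hμ, div_mul_cancel₀ _ (hqpos x1 hx1).ne']
    rw [this]; field_simp; ring
  have hpsd : (DM θ u (fun i => (c2 i : ℂ))).PosSemidef := by
    refine PosSemidef.of_dotProduct_mulVec_nonneg (DM_herm θ u c2) fun v => ?_
    rw [quad_DM_real]
    exact_mod_cast hall v
  have hker := (hpsd.dotProduct_mulVec_zero_iff (x1 : Fin d → ℂ)).1 (by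
    rw [quad_DM_real, hz]; simp)
  have hx1ne : (x1 : Fin d → ℂ) ≠ 0 := by
    intro h0
    have h1 := hnn x1
    have h2 : ‖x1‖ = 1 := by simpa [S] using hx1
    rw [h0, h2] at h1
    simp [nn] at h1
  have hdet : (DM θ u (fun i => (c2 i : ℂ))).det = 0 :=
    exists_mulVec_eq_zero_iff.1 ⟨_, hx1ne, hker⟩
  refine h c2 ?_ ?_
  · intro i
    have : 1 / μ ≤ 1 := by rw [div_le_one hμ0]; linarith
    simp only [hc2, hc1]; linarith
  · rw [rdet, hdet]; simp

theorem opNorm_le {θ : ℝ} (hθ : 0 ≤ θ) (u : Fin m → EuclideanSpace ℂ (Fin d)) (c : Fin m → ℝ)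
    (h1 : ∀ y, 0 ≤ qf θ u c y) (h2 : ∀ y, 0 ≤ qf θ u (fun i => - c i) y) :
    opNorm (∑ i, (c i : ℂ) • outer (u i)) ≤ θ := by
  have e : ∑ i, (c i : ℂ) • outer (u i) = DM 0 u (fun i => (c i : ℂ)) := by simp [DM]
  rw [e, opNorm]
  set X := DM 0 u (fun i => (c i : ℂ)) with hX
  set T := Matrix.toEuclideanCLM (𝕜 := ℂ) X with hT
  have hsym : (T : EuclideanSpace ℂ (Fin d) →ₗ[ℂ] EuclideanSpace ℂ (Fin d)).IsSymmetric := by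
    rw [hT, coe_toEuclideanCLM_eq_toEuclideanLin]
    exact (isHermitian_iff_isSymmetric).1 (DM_herm 0 u c)
  rw [ContinuousLinearMap.norm_eq_iSup_rayleighQuotient T hsym]
  refine ciSup_le fun x => ?_
  have hnn : nn (x : Fin d → ℂ) = ‖x‖ ^ 2 := by
    rw [EuclideanSpace.norm_sq_eq]; simp [nn, Complex.normSq_eq_norm_sq]
  have hin : T.reApplyInnerSelf x = qf 0 u c x := by
    rw [ContinuousLinearMap.reApplyInnerSelf_apply]
    have : inner ℂ x (T x) = (qf 0 u c x : ℂ) := by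
      rw [← quad_DM_real, ← hX, EuclideanSpace.inner_eq_star_dotProduct, dotProduct_comm]
      rfl
    rw [← inner_conj_symm, this]; simp
  rw [ContinuousLinearMap.rayleighQuotient, hin, ← hnn, abs_div, abs_of_nonneg (nn_nonneg _)]
  apply div_le_of_le_mul₀ (nn_nonneg _) hθ
  have a1 := h1 x
  have a2 := h2 x
  simp only [qf, neg_mul, Finset.sum_neg_distrib, zero_mul, zero_add] at a1 a2 ⊢
  rw [abs_le]
  constructor <;> linarith

end mat
end KS

namespace KS
open Matrix

section final
variable {d m : ℕ}

/-- The restriction of a point to one colour, shifted. -/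
def rs {K : Type*} [Ring K] (b : Bool) (a : Fin m → K) (x : Fin m × Bool → K) : Fin m → K :=
  fun k => x (k, b) + a k

theorem rs_same {K : Type*} [Ring K] (b : Bool) (a : Fin m → K) (x : Fin m × Bool → K) (k : Fin m)
    (w : K) : rs b a (x + Pi.single (k, b) w) = rs b a x + Pi.single k w := by
  funext j
  by_cases h : j = k
  · subst h; simp [rs]; abel
  · simp [rs, h]

theorem rs_diff {K : Type*} [Ring K] {b b' : Bool} (hb : b ≠ b') (a : Fin m → K)
    (x : Fin m × Bool → K) (k : Fin m) (w : K) :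
    rs b a (x + Pi.single (k, b') w) = rs b a x := by
  funext j
  simp [rs, hb]

/-- Product of two multi-affine functions in disjoint variables. -/
def pr {K : Type*} [Ring K] (f : (Fin m → K) → K) (a a' : Fin m → K) (x : Fin m × Bool → K) : K :=
  f (rs true a x) * f (rs false a' x)

theorem pr_pd_true {K : Type*} [CommRing K] (f : (Fin m → K) → K) (a a' : Fin m → K)
    (x : Fin m × Bool → K) (k : Fin m) :
    pd (k, true) (pr f a a') x = pd k f (rs true a x) * f (rs false a' x) := by
  simp only [pd, pr, rs_same, rs_diff (show false ≠ true by decide)]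
  ring

theorem pr_pd_false {K : Type*} [CommRing K] (f : (Fin m → K) → K) (a a' : Fin m → K)
    (x : Fin m × Bool → K) (k : Fin m) :
    pd (k, false) (pr f a a') x = f (rs true a x) * pd k f (rs false a' x) := by
  simp only [pd, pr, rs_same, rs_diff (show true ≠ false by decide)]
  ring

theorem pr_maff {K : Type*} [CommRing K] {f : (Fin m → K) → K} (hf : MAff f) (a a' : Fin m → K) :
    MAff (pr f a a') := by
  rintro ⟨k, b⟩ x w
  cases b
  · rw [pr_pd_false]
    simp only [pr, rs_same, rs_diff (show true ≠ false by decide)]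
    rw [hf]; ring
  · rw [pr_pd_true]
    simp only [pr, rs_same, rs_diff (show false ≠ true by decide)]
    rw [hf]; ring

theorem pr_rstab {θ : ℝ} (hθ : 0 < θ) (u : Fin m → EuclideanSpace ℂ (Fin d)) (a a' : Fin m → ℝ) :
    RStab (pr (rdet θ u) a a') := by
  refine ⟨pr (fun c => (DM θ u c).det) (fun k => (a k : ℂ)) (fun k => (a' k : ℂ)),
    ⟨?_, pr_maff (DM_maff θ u) _ _, ?_⟩, ?_⟩
  · unfold pr
    refine ((DM_cont θ u).comp ?_).mul ((DM_cont θ u).comp ?_) <;>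
    · unfold rs; fun_prop
  · intro z hz
    unfold pr
    refine mul_ne_zero (DM_stab hθ u _ ?_) (DM_stab hθ u _ ?_) <;>
    · intro i; simp [rs, hz]
  · intro x
    simp only [pr]
    push_cast
    rw [← rdet_eq, ← rdet_eq]
    simp only [rs, cx]
    push_cast
    rfl

theorem sum_ss_le {u : Fin m → EuclideanSpace ℂ (Fin d)}
    (hu : (1 - ∑ i, outer (u i)).PosSemidef) (y : Fin d → ℂ) : ∑ i, ss (u i) y ≤ nn y := by
  have h := hu.dotProduct_mulVec_nonneg y
  rw [sub_mulVec, one_mulVec, sum_mulVec, dotProduct_sub, dotProduct_sum, quad_one] at h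
  simp only [quad_outer] at h
  have h2 : (0 : ℂ) ≤ ((nn y - ∑ i, ss (u i) y : ℝ) : ℂ) := by
    push_cast; exact h
  have := Complex.zero_le_real.1 h2
  linarith

theorem qf_lower {θ r : ℝ} (hr : 0 ≤ r) {u : Fin m → EuclideanSpace ℂ (Fin d)}
    (hs : ∀ y, ∑ i, ss (u i) y ≤ nn y) (c : Fin m → ℝ) (hc : ∀ i, -r ≤ c i) (y : Fin d → ℂ) :
    (θ - r) * nn y ≤ qf θ u c y := by
  have h1 : ∑ i, (-r) * ss (u i) y ≤ ∑ i, c i * ss (u i) y :=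
    Finset.sum_le_sum fun i _ => mul_le_mul_of_nonneg_right (hc i) (ss_nonneg _ _)
  rw [← Finset.mul_sum] at h1
  have h2 := mul_le_mul_of_nonneg_left (hs y) hr
  unfold qf
  linarith

theorem main_case {ε r : ℝ} (hr : 0 < r) (hr2 : r ^ 2 = ε) (hr1 : r < 1)
    (u : Fin m → EuclideanSpace ℂ (Fin d))
    (hs : ∀ y, ∑ i, ss (u i) y ≤ nn y) (hu : ∀ i, ‖u i‖ ^ 2 ≤ ε) (t : Fin m → ℝ)
    (ht0 : ∀ i, 0 ≤ t i) (ht1 : ∀ i, t i ≤ 1) :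
    ∃ s : Fin m → Bool, opNorm (∑ i, (((if s i = true then 1 else 0) - t i : ℝ) : ℂ) • outer (u i))
      ≤ 2 * r + ε := by
  set θ := 2 * r + ε with hθ
  have hε : 0 < ε := by rw [← hr2]; positivity
  have hθ0 : 0 < θ := by positivity
  have hσ : 0 < θ - r := by rw [hθ]; linarith
  set a' : Fin m → ℝ := fun k => 1 - t k with ha'
  let w : Fin m × Bool → ℝ := fun c => if c.2 = true then t c.1 else 1 - t c.1
  have hw : ∀ c, 0 ≤ w c := by
    rintro ⟨k, b⟩
    have := ht0 k
    have := ht1 k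
    cases b <;> simp [w] <;> linarith
  have hlow : ∀ x : Fin m × Bool → ℝ, (∀ c, -((1 + r) * w c) ≤ x c) →
      (∀ i, -r ≤ rs true t x i) ∧ (∀ i, -r ≤ rs false a' x i) := by
    intro x hx
    refine ⟨fun i => ?_, fun i => ?_⟩
    · have := hx (i, true)
      simp [w] at this
      have h1 := mul_le_mul_of_nonneg_left (ht1 i) hr.le
      simp only [rs]; nlinarith
    · have := hx (i, false)
      simp [w] at this
      have h1 := mul_nonneg hr.le (ht0 i)
      simp only [rs, ha']; nlinarith
  have h0 : ∀ x : Fin m × Bool → ℝ, (∀ c, -((1 + r) * w c) ≤ x c) →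
      0 < rdet θ u (rs true t x) ∧ 0 < rdet θ u (rs false a' x) := fun x hx =>
    ⟨rdet_pos hσ u _ (qf_lower hr.le hs _ (hlow x hx).1),
      rdet_pos hσ u _ (qf_lower hr.le hs _ (hlow x hx).2)⟩
  have hratio : ε / (θ - r) = 1 - 1 / (1 + r) := by
    have : θ - r = r * (1 + r) := by rw [hθ, ← hr2]; ring
    rw [this, ← hr2]
    field_simp
    ring
  obtain ⟨s, hsx⟩ := abstract_main (κ := Fin m) (w := w) hw (by intro k; simp [w])
    (δ := 1 + r) (by linarith) (pr_rstab hθ0 u t a')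
    (fun x hx => mul_pos (h0 x hx).1 (h0 x hx).2)
    (by
      intro k
      rw [pr_pd_true, pr_pd_false]
      set x0 : Fin m × Bool → ℝ := fun c => -((1 + r) * w c) with hx0
      have hl := hlow x0 (fun c => le_rfl)
      have hp := h0 x0 (fun c => le_rfl)
      have b1 := rdet_barrier hσ u _ (qf_lower (θ := θ) hr.le hs _ hl.1) k (hu k)
      have b2 := rdet_barrier hσ u _ (qf_lower (θ := θ) hr.le hs _ hl.2) k (hu k)
      rw [hratio] at b1 b2
      have c1 := mul_le_mul_of_nonneg_left (mul_le_mul_of_nonneg_right b1 hp.2.le) (hw (k, true))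
      have c2 := mul_le_mul_of_nonneg_left (mul_le_mul_of_nonneg_left b2 hp.1.le) (hw (k, false))
      have hsum : w (k, true) + w (k, false) = 1 := by simp [w]
      refine (add_le_add c1 c2).trans (le_of_eq ?_)
      simp only [pr]
      linear_combination ((1 - 1 / (1 + r)) * (rdet θ u (rs true t x0) *
        rdet θ u (rs false a' x0))) * hsum)
  refine ⟨s, ?_⟩
  refine opNorm_le hθ0.le u _ ?_ ?_
  · refine qf_nonneg_of_rdet hθ0 u _ ?_ ?_
    · intro i
      have := ht1 i
      split_ifs <;> linarith
    · intro c' hc'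
      have := hsx (fun c => if c.2 = true then 1 else
        c' c.1 - ((if s c.1 = true then 1 else 0) - t c.1)) (by
          rintro ⟨k, b⟩
          have := hc' k
          cases b
          · simp only [Bool.false_eq_true, if_false]; linarith
          · simp)
      have h3 := right_ne_zero_of_mul this.ne'
      have : c' = rs false a' (fun c => (if c.2 = true then 1 else
        c' c.1 - ((if s c.1 = true then 1 else 0) - t c.1)) - if c.2 = s c.1 then 1 else 0) := by
        funext k
        cases hk : s k <;> simp [rs, ha', hk]
      rw [this]; exact h3
  · refine qf_nonneg_of_rdet hθ0 u _ ?_ ?_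
    · intro i
      have := ht0 i
      split_ifs <;> linarith
    · intro c' hc'
      have := hsx (fun c => if c.2 = false then 1 else
        c' c.1 + ((if s c.1 = true then 1 else 0) - t c.1)) (by
          rintro ⟨k, b⟩
          have := hc' k
          cases b
          · simp
          · simp only [Bool.true_eq_false, if_false]; linarith)
      have h3 := left_ne_zero_of_mul this.ne'
      have : c' = rs true t (fun c => (if c.2 = false then 1 else
        c' c.1 + ((if s c.1 = true then 1 else 0) - t c.1)) - if c.2 = s c.1 then 1 else 0) := by
        funext k
        cases hk : s k <;> simp [rs, hk] <;> ring
      rw [this]; exact h3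

theorem sum_form (u : Fin m → EuclideanSpace ℂ (Fin d)) (t : Fin m → ℝ) (s : Fin m → Bool) :
    (∑ i ∈ Finset.univ.filter (fun i => s i = true), outer (u i)) - ∑ i, (t i : ℂ) • outer (u i) =
      ∑ i, (((if s i = true then 1 else 0) - t i : ℝ) : ℂ) • outer (u i) := by
  rw [Finset.sum_filter, ← Finset.sum_sub_distrib]
  refine Finset.sum_congr rfl fun i _ => ?_
  cases s i <;> simp [sub_smul]

theorem easy_case {B : ℝ} (hB : 0 ≤ B) (u : Fin m → EuclideanSpace ℂ (Fin d))
    (hs : ∀ y, ∑ i, ss (u i) y ≤ B * nn y) (t : Fin m → ℝ)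
    (ht0 : ∀ i, 0 ≤ t i) (ht1 : ∀ i, t i ≤ 1) :
    opNorm (∑ i, (((if (fun _ => false : Fin m → Bool) i = true then 1 else 0) - t i : ℝ) : ℂ) •
      outer (u i)) ≤ B := by
  refine opNorm_le hB u _ ?_ ?_
  · intro y
    have h1 : ∑ i, t i * ss (u i) y ≤ ∑ i, ss (u i) y :=
      Finset.sum_le_sum fun i _ => mul_le_of_le_one_left (ss_nonneg _ _) (ht1 i)
    have := hs y
    simp [qf]
    linarith
  · intro y
    have h1 : 0 ≤ ∑ i, t i * ss (u i) y :=
      Finset.sum_nonneg fun i _ => mul_nonneg (ht0 i) (ss_nonneg _ _)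
    have := mul_nonneg hB (nn_nonneg y)
    simp [qf]
    linarith

end final
end KS

/-- **Main theorem.** There is a universal constant `C > 0` such that whenever
`∑ uᵢuᵢ* ≤ I` (i.e. `I - ∑ uᵢuᵢ*` is positive semidefinite), `‖uᵢ‖² ≤ ε` for all `i`,
and `0 ≤ tᵢ ≤ 1` for all `i`, there is a set of indices `S` with
`‖∑_{i ∈ S} uᵢuᵢ* − ∑ᵢ tᵢ uᵢuᵢ*‖ ≤ C ε^(1/8)`. -/
theorem stmt5 :
    ∃ C : ℝ, 0 < C ∧
      ∀ (d m : ℕ) (ε : ℝ) (u : Fin m → EuclideanSpace ℂ (Fin d)),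
        (1 - ∑ i, outer (u i)).PosSemidef →
        (∀ i, ‖u i‖ ^ 2 ≤ ε) →
        ∀ t : Fin m → ℝ, (∀ i, 0 ≤ t i) → (∀ i, t i ≤ 1) →
          ∃ S : Finset (Fin m),
            opNorm ((∑ i ∈ S, outer (u i)) - ∑ i, (t i : ℂ) • outer (u i))
              ≤ C * ε ^ ((1 : ℝ) / 8) := by
  refine ⟨3, by norm_num, ?_⟩
  intro d m ε u hpsd hu t ht0 ht1
  have hs := KS.sum_ss_le hpsd
  rcases le_or_gt ε 0 with h0 | h0
  · have hz : ∀ y, ∑ i, KS.ss (u i) y ≤ 0 * KS.nn y := by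
      intro y
      rw [zero_mul]
      refine Finset.sum_nonpos fun i _ => (KS.cs (u i) y).trans ?_
      exact mul_nonpos_of_nonpos_of_nonneg ((hu i).trans h0) (KS.nn_nonneg y)
    refine ⟨_, (KS.sum_form u t (fun _ => false)).symm ▸
      (KS.easy_case le_rfl u hz t ht0 ht1).trans ?_⟩
    have : 0 ≤ ε ^ ((1 : ℝ) / 8) := by
      rcases h0.lt_or_eq with h | h
      · rw [Real.rpow_def_of_neg h]
        refine mul_nonneg (Real.exp_pos _).le (Real.cos_nonneg_of_mem_Icc ⟨?_, ?_⟩) <;>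
        linarith [Real.pi_pos]
      · rw [h]; exact Real.rpow_nonneg le_rfl _
    linarith
  rcases le_or_gt 1 ε with h1 | h1
  · refine ⟨_, (KS.sum_form u t (fun _ => false)).symm ▸
      (KS.easy_case zero_le_one u (by simpa using hs) t ht0 ht1).trans ?_⟩
    have := Real.one_le_rpow h1 (show (0 : ℝ) ≤ 1 / 8 by norm_num)
    linarith
  · have hr : 0 < √ε := Real.sqrt_pos.2 h0
    have hr2 : √ε ^ 2 = ε := Real.sq_sqrt h0.le
    have hr1 : √ε < 1 := by rw [Real.sqrt_lt' one_pos]; simpa using h1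
    obtain ⟨s, hsb⟩ := KS.main_case hr hr2 hr1 u hs hu t ht0 ht1
    refine ⟨_, (KS.sum_form u t s).symm ▸ hsb.trans ?_⟩
    have h2 : √ε ≤ ε ^ ((1 : ℝ) / 8) := by
      rw [Real.sqrt_eq_rpow]
      exact Real.rpow_le_rpow_of_exponent_ge h0 h1.le (by norm_num)
    nlinarith
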